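/- arXiv:math/0610326 — 3 statements merged into one kernel-verified Lean document; each statement's English description precedes it below -/
import Mathlib

section
/- Assume a := ess sup ξ₀ < ∞ and that there exist ε ∈ (0,2) and λ₀ > 0 such that Q{ξ₀⁻ > λ} ≥ 1/(log λ)^{2−ε} for all λ ≥ λ₀. Then ℙ⊗Q-almost surely, lim_{n→∞} Z_n/n = −∞. -/
open MeasureTheory ProbabilityTheory Filter Set

/-- Nearest-neighbour transition probability of Sinai's walk: from `x`, a step `s`
has probability `p` if `s = 1`, `1 − p` if `s = −1`, and `0` otherwise, where
`p = ω_x` is the environment at the current site. -/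
noncomputable def stepProb (p : ℝ) (s : ℤ) : ℝ :=
  if s = 1 then p else if s = -1 then 1 - p else 0

/-!
Fix `β < α < 2`, where `1 / (log λ) ^ β` bounds the tail of the scenery from below, and let
`L = k ^ α`. Hoeffding's inequality keeps the potential of the environment below `k ^ γ` on
`[-L, L]` for some `γ ∈ (α / 2, 1)`, outside an event of summable probability. Solving the Poisson
equation for the walk reflected at `-L` then bounds its expected exit time by
`L ^ 2 * exp (2 * k ^ γ) / δ`, which is negligible against `2 ^ k`, so by Borel–Cantelli the walk
leaves `(-L, L)` by time `2 ^ k` for all large `k`. On the other hand `L / (log 8 ^ k) ^ β` is a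
positive power of `k`, so each of `[0, L)` and `(-L, 0]` eventually contains a site where the
scenery is below `-8 ^ k`. The walk, having unit steps, has visited one of these two sites by time
`2 ^ k`. Since the scenery is bounded above and `8 ^ k` is of larger order than `(2 ^ k) ^ 2`, this
single visit drags the averages to `-∞`.
-/

section KilledChain

variable {S : Type*} {p : S → S → ℝ} {A : Finset S} {F : S → ℝ}

/-- The probability that the chain with transition matrix `p`, started at `x`, spends its first `n`
steps in the finite set `A`; the starting point itself is not required to lie in `A`. -/
def stayProb (p : S → S → ℝ) (A : Finset S) : ℕ → S → ℝ
  | 0, _ => 1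
  | n + 1, x => ∑ y ∈ A, p x y * stayProb p A n y

lemma stayProb_succ_le (hp : ∀ x ∈ A, ∀ y ∈ A, 0 ≤ p x y) (hp1 : ∀ x ∈ A, ∑ y ∈ A, p x y ≤ 1)
    (n : ℕ) : ∀ x ∈ A, stayProb p A (n + 1) x ≤ stayProb p A n x := by
  induction n with
  | zero => simpa [stayProb] using hp1
  | succ n ih =>
    exact fun x hx => Finset.sum_le_sum fun y hy =>
      mul_le_mul_of_nonneg_left (ih y hy) (hp x hx y hy)

lemma stayProb_anti (hp : ∀ x ∈ A, ∀ y ∈ A, 0 ≤ p x y) (hp1 : ∀ x ∈ A, ∑ y ∈ A, p x y ≤ 1)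
    {x : S} (hx : x ∈ A) : Antitone fun n => stayProb p A n x :=
  antitone_nat_of_succ_le fun n => stayProb_succ_le hp hp1 n x hx

/-- Foster's criterion: `F` dominates the expected number of steps spent in `A`. -/
lemma sum_stayProb_le (hp : ∀ x ∈ A, ∀ y ∈ A, 0 ≤ p x y) (hF0 : ∀ x ∈ A, 0 ≤ F x)
    (hF : ∀ x ∈ A, 1 + ∑ y ∈ A, p x y * F y ≤ F x) (n : ℕ) :
    ∀ x ∈ A, ∑ k ∈ Finset.range n, stayProb p A k x ≤ F x := by
  induction n with
  | zero => simpa using hF0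
  | succ n ih =>
    intro x hx
    calc ∑ k ∈ Finset.range (n + 1), stayProb p A k x
        = 1 + ∑ y ∈ A, p x y * ∑ k ∈ Finset.range n, stayProb p A k y := by
          simp only [Finset.sum_range_succ', stayProb, Finset.mul_sum]
          rw [Finset.sum_comm, add_comm]
      _ ≤ 1 + ∑ y ∈ A, p x y * F y := by
          gcongr with y hy
          exacts [hp x hx y hy, ih y hy]
      _ ≤ F x := hF x hx

lemma stayProb_le_div (hp : ∀ x ∈ A, ∀ y ∈ A, 0 ≤ p x y) (hp1 : ∀ x ∈ A, ∑ y ∈ A, p x y ≤ 1)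
    (hF0 : ∀ x ∈ A, 0 ≤ F x) (hF : ∀ x ∈ A, 1 + ∑ y ∈ A, p x y * F y ≤ F x) {x : S} (hx : x ∈ A)
    (n : ℕ) : stayProb p A n x ≤ F x / (n + 1) := by
  rw [le_div_iff₀' (by positivity)]
  calc (n + 1 : ℝ) * stayProb p A n x
      = ∑ _k ∈ Finset.range (n + 1), stayProb p A n x := by simp
    _ ≤ ∑ k ∈ Finset.range (n + 1), stayProb p A k x :=
        Finset.sum_le_sum fun k hk =>
          stayProb_anti hp hp1 hx (Nat.lt_succ_iff.1 (Finset.mem_range.1 hk))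
    _ ≤ F x := sum_stayProb_le hp hF0 hF (n + 1) x hx

end KilledChain

section QuenchedChain

variable {Ω S : Type*} {m mΩ : MeasurableSpace Ω} {μ : Measure Ω} {p : Ω → S → S → ℝ} {o : S}
  {X : ℕ → Ω → S}

/-- A Markov chain in random environment: conditionally on the environment σ-algebra `m`, the
process `X` is a Markov chain started at `o` with the random transition matrix `p`. The conditional
law is encoded by the probabilities of the cylinders `{X₀ = x₀, …, Xₙ = xₙ}`. -/
structure IsQuenchedChain [MeasurableSpace S] (m : MeasurableSpace Ω) {mΩ : MeasurableSpace Ω}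
    (μ : Measure Ω) (p : Ω → S → S → ℝ) (o : S) (X : ℕ → Ω → S) : Prop where
  le : m ≤ mΩ
  measurable : ∀ n, Measurable (X n)
  condExp_cylinder : ∀ (n : ℕ) (x : ℕ → S), x 0 = o →
    μ[Set.indicator {ω | ∀ i ≤ n, X i ω = x i} (fun _ => (1 : ℝ)) | m]
      =ᵐ[μ] fun ω => ∏ i ∈ Finset.range n, p ω (x i) (x (i + 1))

/-- The event that `X` follows the path `x` up to time `n` and then stays in `A` for `k` steps. -/
def cylinderStay (X : ℕ → Ω → S) (A : Finset S) (x : ℕ → S) (n k : ℕ) : Set Ω :=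
  {ω | (∀ i ≤ n, X i ω = x i) ∧ ∀ i ∈ Finset.Ioc n (n + k), X i ω ∈ A}

lemma cylinderStay_succ (X : ℕ → Ω → S) (A : Finset S) (x : ℕ → S) (n k : ℕ) :
    cylinderStay X A x n (k + 1) =
      ⋃ y ∈ A, cylinderStay X A (Function.update x (n + 1) y) (n + 1) k := by
  have hupd (y : S) (ω : Ω) : (∀ i ≤ n + 1, X i ω = Function.update x (n + 1) y i) ↔
      X (n + 1) ω = y ∧ ∀ i ≤ n, X i ω = x i := by
    simp only [Nat.le_succ_iff, or_imp, forall_and, forall_eq, Function.update_self]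
    rw [and_comm]
    refine and_congr_right fun _ => forall₂_congr fun i hi => ?_
    rw [Function.update_of_ne (by omega)]
  have hIoc : Finset.Ioc n (n + (k + 1)) = insert (n + 1) (Finset.Ioc (n + 1) (n + 1 + k)) := by
    ext i
    simp only [Finset.mem_Ioc, Finset.mem_insert]
    omega
  ext ω
  simp only [cylinderStay, hIoc, hupd, Finset.forall_mem_insert, mem_iUnion, mem_ofPred_eq,
    exists_prop]
  grind

lemma disjoint_cylinderStay_update (X : ℕ → Ω → S) (A : Finset S) (x : ℕ → S)
    (n k : ℕ) {y z : S} (hyz : y ≠ z) :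
    Disjoint (cylinderStay X A (Function.update x n y) n k)
      (cylinderStay X A (Function.update x n z) n k) := by
  rw [Set.disjoint_left]
  rintro ω ⟨hy, -⟩ ⟨hz, -⟩
  exact hyz (by simpa using (hy n le_rfl).symm.trans (hz n le_rfl))

lemma measurableSet_cylinderStay [MeasurableSpace S] [MeasurableSingletonClass S]
    (hX : ∀ n, Measurable (X n)) (A : Finset S) (x : ℕ → S) (n k : ℕ) :
    MeasurableSet (cylinderStay X A x n k) := by
  have : cylinderStay X A x n k =
      (⋂ i ≤ n, X i ⁻¹' {x i}) ∩ ⋂ i ∈ Finset.Ioc n (n + k), X i ⁻¹' A := by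
    ext ω
    simp [cylinderStay]
  rw [this]
  exact (MeasurableSet.iInter fun i => .iInter fun _ => hX i (measurableSet_singleton _)).inter
    (MeasurableSet.iInter fun i => .iInter fun _ => hX i A.measurableSet)

namespace IsQuenchedChain

variable [MeasurableSpace S] [MeasurableSingletonClass S]

theorem condExp_cylinderStay [IsFiniteMeasure μ] (h : IsQuenchedChain m μ p o X)
    (A : Finset S) (k : ℕ) : ∀ (n : ℕ) (x : ℕ → S), x 0 = o →
    μ[Set.indicator (cylinderStay X A x n k) (fun _ => (1 : ℝ)) | m] =ᵐ[μ]
      fun ω => (∏ i ∈ Finset.range n, p ω (x i) (x (i + 1))) * stayProb (p ω) A k (x n) := by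
  induction k with
  | zero =>
    intro n x hx
    simpa [cylinderStay, stayProb] using h.condExp_cylinder n x hx
  | succ k ih =>
    intro n x hx
    have hind : Set.indicator (cylinderStay X A x n (k + 1)) (fun _ => (1 : ℝ)) =
        ∑ y ∈ A, Set.indicator (cylinderStay X A (Function.update x (n + 1) y) (n + 1) k)
          (fun _ => (1 : ℝ)) := by
      rw [cylinderStay_succ, Finset.indicator_biUnion]
      · ext ω; simp
      · exact fun y _ z _ hyz => disjoint_cylinderStay_update X A x (n + 1) k hyz
    have hsum := condExp_finsetSum (μ := μ) (s := A) (fun y _ =>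
      (integrable_const (1 : ℝ)).indicator
        (measurableSet_cylinderStay h.measurable A (Function.update x (n + 1) y) (n + 1) k)) m
    have hupd := (ae_ball_iff A.countable_toSet).2 fun y (_ : y ∈ A) =>
      ih (n + 1) (Function.update x (n + 1) y) (by simp [hx])
    rw [hind]
    filter_upwards [hsum, hupd] with ω hsumω hupdω
    rw [hsumω, Finset.sum_apply, Finset.sum_congr rfl hupdω, stayProb, Finset.mul_sum]
    refine Finset.sum_congr rfl fun y _ => ?_
    rw [Finset.prod_range_succ, Function.update_self, Function.update_of_ne (by omega), mul_assoc]
    congr 1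
    refine Finset.prod_congr rfl fun i hi => ?_
    have := Finset.mem_range.1 hi
    rw [Function.update_of_ne (by omega), Function.update_of_ne (by omega)]

lemma measureReal_cylinder [IsFiniteMeasure μ] (h : IsQuenchedChain m μ p o X) (n : ℕ)
    {x : ℕ → S} (hx : x 0 = o) :
    μ.real {ω | ∀ i ≤ n, X i ω = x i} =
      ∫ ω, ∏ i ∈ Finset.range n, p ω (x i) (x (i + 1)) ∂μ := by
  have hmeas : MeasurableSet {ω | ∀ i ≤ n, X i ω = x i} := by
    simpa [cylinderStay] using measurableSet_cylinderStay h.measurable ∅ x n 0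
  rw [← integral_congr_ae (h.condExp_cylinder n x hx), integral_condExp h.le]
  exact (integral_indicator_one hmeas).symm

lemma ae_eq_start [IsProbabilityMeasure μ] (h : IsQuenchedChain m μ p o X) :
    ∀ᵐ ω ∂μ, X 0 ω = o := by
  have hmeas : MeasurableSet {ω | X 0 ω = o} := h.measurable 0 (measurableSet_singleton o)
  have hone : μ.real {ω | X 0 ω = o} = 1 := by
    simpa using h.measureReal_cylinder 0 (x := fun _ => o) rfl
  rw [ae_iff, ← Set.compl_ofPred, prob_compl_eq_zero_iff hmeas]
  simpa [measureReal_def, ENNReal.toReal_eq_one_iff] using hone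

lemma ae_forall_transition [Countable S] [IsProbabilityMeasure μ]
    (h : IsQuenchedChain m μ p o X) {R : S → S → Prop} (hR : ∀ ω x y, ¬ R x y → p ω x y = 0) :
    ∀ᵐ ω ∂μ, ∀ n, R (X n ω) (X (n + 1) ω) := by
  have hpath (n : ℕ) (x : ℕ → S) :
      ∀ᵐ ω ∂μ, (∀ i ≤ n + 1, X i ω = x i) → R (X n ω) (X (n + 1) ω) := by
    by_cases hx : x 0 = o ∧ ¬ R (x n) (x (n + 1))
    · have hnull : μ.real {ω | ∀ i ≤ n + 1, X i ω = x i} = 0 := by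
        simp [h.measureReal_cylinder (n + 1) hx.1, Finset.prod_range_succ, hR _ _ _ hx.2]
      rw [measureReal_eq_zero_iff] at hnull
      filter_upwards [measure_eq_zero_iff_ae_notMem.1 hnull] with ω hω hωx
      exact absurd hωx hω
    · filter_upwards [h.ae_eq_start] with ω h0 hωx
      rw [hωx n (by omega), hωx (n + 1) le_rfl]
      by_contra hcon
      exact hx ⟨(hωx 0 (by omega)).symm.trans h0, hcon⟩
  rw [ae_all_iff]
  intro n
  -- Paths up to time `n + 1` range over the countable type `Fin (n + 2) → S`.
  filter_upwards [ae_all_iff.2 fun v : Fin (n + 2) → S => hpath n fun i => v (Fin.ofNat _ i)]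
    with ω hω
  refine hω (fun i => X i ω) fun i hi => ?_
  simp [Nat.mod_eq_of_lt (show i < n + 2 by omega)]

lemma measureReal_forall_mem_le_integral [IsProbabilityMeasure μ] (h : IsQuenchedChain m μ p o X)
    (A : Finset S) (n : ℕ) :
    μ.real {ω | ∀ i ≤ n, X i ω ∈ A} ≤ ∫ ω, stayProb (p ω) A n o ∂μ := by
  have hcond := h.condExp_cylinderStay A n 0 (fun _ => o) rfl
  simp only [Finset.range_zero, Finset.prod_empty, one_mul] at hcond
  rw [← integral_congr_ae hcond, integral_condExp h.le,
    show (fun _ => (1 : ℝ)) = (1 : Ω → ℝ) from rfl,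
    integral_indicator_one (measurableSet_cylinderStay h.measurable A _ 0 n)]
  refine ENNReal.toReal_mono (measure_ne_top _ _) (measure_mono_ae ?_)
  filter_upwards [h.ae_eq_start] with ω h0 hω
  exact ⟨fun i hi => by rwa [Nat.le_zero.1 hi],
    fun i hi => hω i (by simpa using (Finset.mem_Ioc.1 hi).2)⟩

theorem measureReal_forall_mem_le_add [IsProbabilityMeasure μ] (h : IsQuenchedChain m μ p o X)
    (A : Finset S) (n : ℕ) {G : Set Ω} (hG : MeasurableSet G) {r : ℝ} (hr : 0 ≤ r)
    (hle_one : ∀ᵐ ω ∂μ, stayProb (p ω) A n o ≤ 1)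
    (hle : ∀ᵐ ω ∂μ, ω ∈ G → stayProb (p ω) A n o ≤ r) :
    μ.real {ω | ∀ i ≤ n, X i ω ∈ A} ≤ r + μ.real Gᶜ := by
  have hint : Integrable (fun ω => stayProb (p ω) A n o) μ :=
    integrable_condExp.congr (by simpa using h.condExp_cylinderStay A n 0 (fun _ => o) rfl)
  have hindicator : Integrable (Set.indicator Gᶜ (1 : Ω → ℝ)) μ :=
    (integrable_const (1 : ℝ)).indicator hG.compl
  calc μ.real {ω | ∀ i ≤ n, X i ω ∈ A}
      ≤ ∫ ω, stayProb (p ω) A n o ∂μ := h.measureReal_forall_mem_le_integral A n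
    _ ≤ ∫ ω, r + Set.indicator Gᶜ (1 : Ω → ℝ) ω ∂μ := by
        refine integral_mono_ae hint ((integrable_const r).add hindicator) ?_
        filter_upwards [hle_one, hle] with ω h1 hωr
        by_cases hω : ω ∈ G
        · simpa [hω] using hωr hω
        · simpa [hω] using h1.trans (le_add_of_nonneg_left hr)
    _ = r + μ.real Gᶜ := by
        rw [integral_add (integrable_const r) hindicator, integral_indicator_one hG.compl]
        simp

end IsQuenchedChain

end QuenchedChain

section NearestNeighbour

/-- The transition matrix of the nearest-neighbour walk on `ℤ` which steps from `x` to `x + 1` with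
probability `w x` and to `x - 1` otherwise. -/
noncomputable def nnKernel (w : ℤ → ℝ) (x y : ℤ) : ℝ := stepProb (w x) (y - x)

lemma nnKernel_nonneg {w : ℤ → ℝ} {x : ℤ} (h0 : 0 ≤ w x) (h1 : w x ≤ 1) (y : ℤ) :
    0 ≤ nnKernel w x y := by
  unfold nnKernel stepProb
  split_ifs <;> linarith

lemma nnKernel_eq_zero (w : ℤ → ℝ) {x y : ℤ} (h : |y - x| ≠ 1) : nnKernel w x y = 0 := by
  unfold nnKernel stepProb
  split_ifs with h1 h2
  · simp [h1] at h
  · simp [h2] at h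
  · rfl

lemma sum_nnKernel_mul_le {w F : ℤ → ℝ} {x : ℤ} (h0 : 0 ≤ w x) (h1 : w x ≤ 1)
    (hF : ∀ y, 0 ≤ F y) (A : Finset ℤ) :
    ∑ y ∈ A, nnKernel w x y * F y ≤ w x * F (x + 1) + (1 - w x) * F (x - 1) := by
  calc ∑ y ∈ A, nnKernel w x y * F y
      = ∑ y ∈ A ∩ {x + 1, x - 1}, nnKernel w x y * F y := by
        refine (Finset.sum_subset Finset.inter_subset_left fun y hyA hy => ?_).symm
        rw [nnKernel_eq_zero w fun habs => hy ?_, zero_mul]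
        have := (abs_eq zero_le_one).1 habs
        simp only [Finset.mem_inter, Finset.mem_insert, Finset.mem_singleton]
        exact ⟨hyA, by omega⟩
    _ ≤ ∑ y ∈ {x + 1, x - 1}, nnKernel w x y * F y :=
        Finset.sum_le_sum_of_subset_of_nonneg Finset.inter_subset_right fun y _ _ =>
          mul_nonneg (nnKernel_nonneg h0 h1 y) (hF y)
    _ = w x * F (x + 1) + (1 - w x) * F (x - 1) := by
        rw [Finset.sum_pair (by omega)]
        simp [nnKernel, stepProb]

lemma sum_nnKernel_le_one {w : ℤ → ℝ} {x : ℤ} (h0 : 0 ≤ w x) (h1 : w x ≤ 1) (A : Finset ℤ) :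
    ∑ y ∈ A, nnKernel w x y ≤ 1 := by
  simpa using sum_nnKernel_mul_le (F := 1) h0 h1 (fun _ => zero_le_one) A

lemma stayProb_nnKernel_le_one {w : ℤ → ℝ} {A : Finset ℤ} {x : ℤ} (hw : ∀ y, 0 ≤ w y ∧ w y ≤ 1)
    (hx : x ∈ A) (n : ℕ) : stayProb (nnKernel w) A n x ≤ 1 :=
  stayProb_anti (fun y _ z _ => nnKernel_nonneg (hw y).1 (hw y).2 z)
    (fun y _ => sum_nnKernel_le_one (hw y).1 (hw y).2 A) hx (Nat.zero_le n)

end NearestNeighbour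

section Potential

variable {w : ℤ → ℝ} {l r x y : ℤ} {δ t : ℝ}

/-- The increment `log ((1 - p) / p)` of Sinai's potential at a site where the walk steps to the
right with probability `p`. -/
noncomputable def logRatio (p : ℝ) : ℝ := Real.log ((1 - p) / p)

/-- Sinai's potential to the right of `l`, normalised to vanish at `l` (and, the sum being empty,
to the left of `l`). -/
noncomputable def potential (w : ℤ → ℝ) (l y : ℤ) : ℝ := ∑ i ∈ Finset.Ico l y, logRatio (w i)

/-- The expected time the walk needs to go from `y` to `y + 1` when it stays put instead of stepping
to the left from `l`. -/
noncomputable def crossingTime (w : ℤ → ℝ) (l y : ℤ) : ℝ :=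
  ∑ z ∈ Finset.Icc l y, Real.exp (potential w l (y + 1) - potential w l (z + 1)) / w z

/-- The expected time the walk needs to go from `x` to `r` when it stays put instead of stepping to
the left from `l`. -/
noncomputable def hittingTime (w : ℤ → ℝ) (l r x : ℤ) : ℝ :=
  ∑ y ∈ Finset.Ico x r, crossingTime w l y

lemma exp_logRatio {p : ℝ} (h0 : 0 < p) (h1 : p < 1) : Real.exp (logRatio p) = (1 - p) / p :=
  Real.exp_log (div_pos (by linarith) h0)

lemma abs_logRatio_le {p : ℝ} (hδ : 0 < δ) (h : δ ≤ p ∧ p ≤ 1 - δ) :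
    |logRatio p| ≤ -Real.log δ := by
  have hp : 0 < p := hδ.trans_le h.1
  have hq : 0 < 1 - p := by linarith
  have hlog : Real.log δ ≤ Real.log p := Real.log_le_log hδ h.1
  have hlog' : Real.log δ ≤ Real.log (1 - p) := Real.log_le_log hδ (by linarith)
  have hp0 : Real.log p ≤ 0 := Real.log_nonpos hp.le (by linarith)
  have hq0 : Real.log (1 - p) ≤ 0 := Real.log_nonpos hq.le (by linarith)
  rw [logRatio, Real.log_div hq.ne' hp.ne', abs_le]
  constructor <;> linarith

lemma measurable_logRatio : Measurable logRatio := by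
  unfold logRatio
  fun_prop

lemma measurable_potential {Ω : Type*} [MeasurableSpace Ω] {env : ℤ → Ω → ℝ}
    (henv : ∀ i, Measurable (env i)) (l y : ℤ) :
    Measurable fun ω => potential (fun i => env i ω) l y :=
  Finset.measurable_fun_sum _ fun i _ => measurable_logRatio.comp (henv i)

lemma potential_add_one (w : ℤ → ℝ) (h : l ≤ y) :
    potential w l (y + 1) = potential w l y + logRatio (w y) :=
  (Finset.sum_Ico_add_eq_sum_Ico_add_one h _).symm

lemma mul_crossingTime (h0 : 0 < w y) (h1 : w y < 1) (h : l ≤ y) :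
    w y * crossingTime w l y = 1 + (1 - w y) * crossingTime w l (y - 1) := by
  rw [crossingTime, ← Finset.insert_Icc_sub_one_right_eq_Icc h, Finset.sum_insert (by simp),
    crossingTime, sub_add_cancel, mul_add, sub_self, Real.exp_zero, mul_one_div_cancel h0.ne',
    Finset.mul_sum, Finset.mul_sum]
  congr 1
  refine Finset.sum_congr rfl fun z _ => ?_
  rw [potential_add_one w h, add_sub_right_comm, Real.exp_add, exp_logRatio h0 h1]
  field_simp

lemma crossingTime_nonneg (hw : ∀ z, 0 ≤ w z) : 0 ≤ crossingTime w l y :=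
  Finset.sum_nonneg fun z _ => div_nonneg (Real.exp_nonneg _) (hw z)

lemma hittingTime_nonneg (hw : ∀ z, 0 ≤ w z) : 0 ≤ hittingTime w l r x :=
  Finset.sum_nonneg fun _ _ => crossingTime_nonneg hw

lemma hittingTime_eq_add (h : x < r) :
    hittingTime w l r x = crossingTime w l x + hittingTime w l r (x + 1) := by
  rw [hittingTime, ← Finset.insert_Ico_add_one_left_eq_Ico h, Finset.sum_insert (by simp),
    hittingTime]

lemma hittingTime_step (h0 : 0 < w x) (h1 : w x < 1) (hx : x ∈ Finset.Ioo l r) :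
    1 + (w x * hittingTime w l r (x + 1) + (1 - w x) * hittingTime w l r (x - 1)) =
      hittingTime w l r x := by
  obtain ⟨hlx, hxr⟩ := Finset.mem_Ioo.1 hx
  have hright : hittingTime w l r x = crossingTime w l x + hittingTime w l r (x + 1) :=
    hittingTime_eq_add hxr
  have hleft : hittingTime w l r (x - 1) = crossingTime w l (x - 1) + hittingTime w l r x := by
    rw [hittingTime_eq_add (by omega), sub_add_cancel]
  linear_combination (1 - w x) * hleft - w x * hright - mul_crossingTime h0 h1 hlx.le

lemma crossingTime_le (hδ : 0 < δ) (hw : ∀ z ∈ Finset.Ico l r, δ ≤ w z)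
    (hV : ∀ z ∈ Finset.Icc l r, |potential w l z| ≤ t) (hy : y ∈ Finset.Ico l r) :
    crossingTime w l y ≤ (r - l) * (Real.exp (2 * t) / δ) := by
  obtain ⟨hly, hyr⟩ := Finset.mem_Ico.1 hy
  have hterm (z : ℤ) (hz : z ∈ Finset.Icc l y) :
      Real.exp (potential w l (y + 1) - potential w l (z + 1)) / w z ≤ Real.exp (2 * t) / δ := by
    obtain ⟨hlz, hzy⟩ := Finset.mem_Icc.1 hz
    have hVy := abs_le.1 (hV (y + 1) (Finset.mem_Icc.2 ⟨by omega, by omega⟩))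
    have hVz := abs_le.1 (hV (z + 1) (Finset.mem_Icc.2 ⟨by omega, by omega⟩))
    gcongr
    · linarith
    · exact hw z (Finset.mem_Ico.2 ⟨hlz, by omega⟩)
  have hcard : (Finset.card (Finset.Icc l y) : ℝ) ≤ r - l := by
    rw [Int.card_Icc]
    exact_mod_cast (by omega : ((y + 1 - l).toNat : ℤ) ≤ r - l)
  calc crossingTime w l y
      ≤ Finset.card (Finset.Icc l y) * (Real.exp (2 * t) / δ) := by
        simpa only [crossingTime, nsmul_eq_mul] using Finset.sum_le_card_nsmul _ _ _ hterm
    _ ≤ (r - l) * (Real.exp (2 * t) / δ) := by gcongr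

lemma hittingTime_le (hδ : 0 < δ) (hw : ∀ z ∈ Finset.Ico l r, δ ≤ w z)
    (hV : ∀ z ∈ Finset.Icc l r, |potential w l z| ≤ t) (hx : x ∈ Finset.Icc l r) :
    hittingTime w l r x ≤ (r - l) ^ 2 * (Real.exp (2 * t) / δ) := by
  obtain ⟨hlx, hxr⟩ := Finset.mem_Icc.1 hx
  have hcard : (Finset.card (Finset.Ico x r) : ℝ) ≤ r - l := by
    rw [Int.card_Ico]
    exact_mod_cast (by omega : ((r - x).toNat : ℤ) ≤ r - l)
  have hlr : (0 : ℝ) ≤ r - l := (Nat.cast_nonneg _).trans hcard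
  calc hittingTime w l r x
      ≤ Finset.card (Finset.Ico x r) * ((r - l) * (Real.exp (2 * t) / δ)) := by
        simpa only [hittingTime, nsmul_eq_mul] using Finset.sum_le_card_nsmul _ _ _ fun y hy =>
          crossingTime_le hδ hw hV (Finset.Ico_subset_Ico_left hlx hy)
    _ ≤ (r - l) * ((r - l) * (Real.exp (2 * t) / δ)) := by gcongr
    _ = (r - l) ^ 2 * (Real.exp (2 * t) / δ) := by ring

theorem stayProb_nnKernel_le (hδ : 0 < δ) (hw : ∀ z, δ ≤ w z ∧ w z ≤ 1 - δ)
    (hV : ∀ z ∈ Finset.Icc l r, |potential w l z| ≤ t) (hx : x ∈ Finset.Ioo l r) (n : ℕ) :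
    stayProb (nnKernel w) (Finset.Ioo l r) n x ≤
      (r - l) ^ 2 * (Real.exp (2 * t) / δ) / (n + 1) := by
  have h0 (z : ℤ) : 0 < w z := hδ.trans_le (hw z).1
  have h1 (z : ℤ) : w z < 1 := by linarith [(hw z).2]
  have hF (z : ℤ) : 0 ≤ hittingTime w l r z := hittingTime_nonneg fun z => (h0 z).le
  calc stayProb (nnKernel w) (Finset.Ioo l r) n x
      ≤ hittingTime w l r x / (n + 1) := by
        refine stayProb_le_div (fun z _ y _ => nnKernel_nonneg (h0 z).le (h1 z).le y)
          (fun z _ => sum_nnKernel_le_one (h0 z).le (h1 z).le _) (fun z _ => hF z)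
          (fun z hz => ?_) hx n
        rw [← hittingTime_step (h0 z) (h1 z) hz]
        gcongr
        exact sum_nnKernel_mul_le (h0 z).le (h1 z).le hF _
    _ ≤ (r - l) ^ 2 * (Real.exp (2 * t) / δ) / (n + 1) := by
        gcongr
        exact hittingTime_le hδ (fun z _ => (hw z).1) hV (Finset.Ioo_subset_Icc_self hx)

end Potential

section SubGaussian

variable {Ω : Type*} {mΩ : MeasurableSpace Ω} {μ : Measure Ω} {Y : Ω → ℝ}

lemma hasSubgaussianMGF_mono {c d : NNReal} (h : HasSubgaussianMGF Y c μ) (hcd : c ≤ d) :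
    HasSubgaussianMGF Y d μ where
  integrable_exp_mul := h.integrable_exp_mul
  mgf_le t := (h.mgf_le t).trans (by gcongr)

lemma hasSubgaussianMGF_of_abs_le_of_integral_eq_zero [IsProbabilityMeasure μ] {b : ℝ}
    (hY : AEMeasurable Y μ) (hb : ∀ᵐ ω ∂μ, |Y ω| ≤ b) (hmean : ∫ ω, Y ω ∂μ = 0) :
    HasSubgaussianMGF Y (‖b‖₊ ^ 2) μ := by
  have hIcc : ∀ᵐ ω ∂μ, Y ω ∈ Set.Icc (-b) b := hb.mono fun ω hω => abs_le.1 hω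
  simpa [sub_neg_eq_add, ← two_mul] using
    hasSubgaussianMGF_of_mem_Icc_of_integral_eq_zero hY hIcc hmean

lemma measureReal_lt_abs_le_of_hasSubgaussianMGF [IsFiniteMeasure μ] {c : NNReal}
    (h : HasSubgaussianMGF Y c μ) {t : ℝ} (ht : 0 ≤ t) :
    μ.real {ω | t < |Y ω|} ≤ 2 * Real.exp (-t ^ 2 / (2 * c)) := by
  have hsubset : {ω | t < |Y ω|} ⊆ {ω | t ≤ Y ω} ∪ {ω | t ≤ (-Y) ω} := fun ω hω =>
    (lt_abs.1 (mem_ofPred_eq ▸ hω)).imp (fun h => h.le) fun h => h.le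
  calc μ.real {ω | t < |Y ω|}
      ≤ μ.real {ω | t ≤ Y ω} + μ.real {ω | t ≤ (-Y) ω} :=
        (measureReal_mono hsubset).trans (measureReal_union_le _ _)
    _ ≤ 2 * Real.exp (-t ^ 2 / (2 * c)) := by
        linarith [h.measure_ge_le ht, h.neg.measure_ge_le ht]

end SubGaussian

/-- A random environment of Sinai's type: the sites are independent, uniformly elliptic with
constant `δ`, and the increments of the potential are centred. -/
structure IsSinaiEnvironment {Ω : Type*} {mΩ : MeasurableSpace Ω} (δ : ℝ) (env : ℤ → Ω → ℝ)
    (μ : Measure Ω) : Prop where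
  pos : 0 < δ
  measurable : ∀ i, Measurable (env i)
  indep : iIndepFun env μ
  elliptic : ∀ i, ∀ᵐ ω ∂μ, δ ≤ env i ω ∧ env i ω ≤ 1 - δ
  integral_logRatio : ∀ i, ∫ ω, logRatio (env i ω) ∂μ = 0

namespace IsSinaiEnvironment

variable {Ω : Type*} {m mΩ : MeasurableSpace Ω} {μ : Measure Ω} [IsProbabilityMeasure μ]
  {env : ℤ → Ω → ℝ} {δ t : ℝ} {l r o : ℤ} {X : ℕ → Ω → ℤ}

lemma lt_one (h : IsSinaiEnvironment δ env μ) : δ < 1 := by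
  obtain ⟨ω, hω⟩ := (h.elliptic 0).exists
  linarith [h.pos]

lemma hasSubgaussianMGF_potential (h : IsSinaiEnvironment δ env μ) (l y : ℤ) :
    HasSubgaussianMGF (fun ω => potential (fun i => env i ω) l y)
      ((y - l).toNat * ‖Real.log δ‖₊ ^ 2) μ := by
  have hsite (i : ℤ) : HasSubgaussianMGF (fun ω => logRatio (env i ω)) (‖Real.log δ‖₊ ^ 2) μ := by
    rw [← nnnorm_neg]
    exact hasSubgaussianMGF_of_abs_le_of_integral_eq_zero
      (measurable_logRatio.comp (h.measurable i)).aemeasurable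
      ((h.elliptic i).mono fun ω hω => abs_logRatio_le h.pos hω) (h.integral_logRatio i)
  simpa [potential] using HasSubgaussianMGF.sum_of_iIndepFun (s := Finset.Ico l y)
    (h.indep.comp (fun _ => logRatio) fun _ => measurable_logRatio) fun i _ => hsite i

lemma measureReal_exists_lt_abs_potential_le (h : IsSinaiEnvironment δ env μ) (hlr : l ≤ r)
    (ht : 0 ≤ t) :
    μ.real {ω | ∃ y ∈ Finset.Icc l r, t < |potential (fun i => env i ω) l y|} ≤
      (r - l + 1) * (2 * Real.exp (-t ^ 2 / (2 * ((r - l) * Real.log δ ^ 2)))) := by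
  have hcast : (((r - l).toNat : ℕ) : ℝ) = r - l := by
    exact_mod_cast Int.toNat_of_nonneg (sub_nonneg.2 hlr)
  have hsite (y : ℤ) (hy : y ∈ Finset.Icc l r) :
      μ.real {ω | t < |potential (fun i => env i ω) l y|} ≤
        2 * Real.exp (-t ^ 2 / (2 * ((r - l) * Real.log δ ^ 2))) := by
    have hle : (y - l).toNat ≤ (r - l).toNat :=
      Int.toNat_le_toNat (sub_le_sub_right (Finset.mem_Icc.1 hy).2 l)
    have hmono := hasSubgaussianMGF_mono (d := (r - l).toNat * ‖Real.log δ‖₊ ^ 2)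
      (h.hasSubgaussianMGF_potential l y) (by gcongr)
    simpa [hcast] using measureReal_lt_abs_le_of_hasSubgaussianMGF hmono ht
  have hcard : (Finset.card (Finset.Icc l r) : ℝ) = r - l + 1 := by
    rw [Int.card_Icc, ← hcast]
    exact_mod_cast (by omega : (r + 1 - l).toNat = (r - l).toNat + 1)
  calc μ.real {ω | ∃ y ∈ Finset.Icc l r, t < |potential (fun i => env i ω) l y|}
      = μ.real (⋃ y ∈ Finset.Icc l r, {ω | t < |potential (fun i => env i ω) l y|}) := by
        congr 1
        ext ω
        simp
    _ ≤ ∑ y ∈ Finset.Icc l r, μ.real {ω | t < |potential (fun i => env i ω) l y|} :=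
        measureReal_biUnion_finset_le _ _
    _ ≤ (r - l + 1) * (2 * Real.exp (-t ^ 2 / (2 * ((r - l) * Real.log δ ^ 2)))) := by
        simpa only [nsmul_eq_mul, hcard] using Finset.sum_le_card_nsmul _ _ _ hsite

theorem measureReal_forall_mem_Ioo_le (h : IsSinaiEnvironment δ env μ)
    (hX : IsQuenchedChain m μ (fun ω => nnKernel fun i => env i ω) o X)
    (ho : o ∈ Finset.Ioo l r) (ht : 0 ≤ t) (n : ℕ) :
    μ.real {ω | ∀ i ≤ n, X i ω ∈ Finset.Ioo l r} ≤
      (r - l) ^ 2 * (Real.exp (2 * t) / δ) / (n + 1) +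
        (r - l + 1) * (2 * Real.exp (-t ^ 2 / (2 * ((r - l) * Real.log δ ^ 2)))) := by
  set G := {ω | ∃ y ∈ Finset.Icc l r, t < |potential (fun i => env i ω) l y|}ᶜ with hG
  have hGmeas : MeasurableSet G := by
    have hinter : G = ⋂ y ∈ Finset.Icc l r, {ω | |potential (fun i => env i ω) l y| ≤ t} := by
      ext ω
      simp [hG]
    rw [hinter]
    exact MeasurableSet.iInter fun y => .iInter fun _ =>
      measurableSet_le (measurable_potential h.measurable l y).abs measurable_const
  have hell := ae_all_iff.2 h.elliptic
  have hδ := h.pos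
  refine (hX.measureReal_forall_mem_le_add (Finset.Ioo l r) n hGmeas
    (r := (r - l) ^ 2 * (Real.exp (2 * t) / δ) / (n + 1)) (by positivity) ?_ ?_).trans ?_
  · filter_upwards [hell] with ω hω
    exact stayProb_nnKernel_le_one (fun z => ⟨hδ.le.trans (hω z).1, by linarith [(hω z).2]⟩) ho n
  · filter_upwards [hell] with ω hω hωG
    exact stayProb_nnKernel_le h.pos hω (by simpa [hG] using hωG) ho n
  · rw [hG, compl_compl]
    obtain ⟨hl, hr⟩ := Finset.mem_Ioo.1 ho
    gcongr
    exact h.measureReal_exists_lt_abs_potential_le (hl.trans hr).le ht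

end IsSinaiEnvironment

section Scales

variable {α γ δ c η : ℝ}

lemma summable_rpow_mul_exp_neg_mul_rpow (hc : 0 < c) (hη : 0 < η) (p : ℝ) :
    Summable fun k : ℕ => (k : ℝ) ^ p * Real.exp (-(c * (k : ℝ) ^ η)) := by
  have hexp := (isLittleO_exp_neg_mul_rpow_atTop hc (-(p + 2) / η)).comp_tendsto
    ((tendsto_rpow_atTop hη).comp tendsto_natCast_atTop_atTop)
  have hmul := (Asymptotics.isBigO_refl (fun k : ℕ => (k : ℝ) ^ p) atTop).mul hexp.isBigO
  have hsq : Summable fun k : ℕ => (k : ℝ) ^ (-2 : ℝ) := Real.summable_nat_rpow.2 (by norm_num)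
  refine summable_of_isBigO_nat hsq (hmul.congr' (by simp [Function.comp_def]) ?_)
  filter_upwards [eventually_gt_atTop 0] with k hk
  have hk0 : (0 : ℝ) < k := by exact_mod_cast hk
  simp only [Function.comp_apply]
  rw [← Real.rpow_mul hk0.le, ← Real.rpow_add hk0]
  congr 1
  field_simp
  ring

lemma eventually_rpow_le_mul (hγ : γ < 1) (hc : 0 < c) :
    ∀ᶠ k : ℕ in atTop, (k : ℝ) ^ γ ≤ c * k := by
  have hlim : Tendsto (fun k : ℕ => (k : ℝ) ^ (-(1 - γ))) atTop (nhds 0) :=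
    (tendsto_rpow_neg_atTop (by linarith)).comp tendsto_natCast_atTop_atTop
  filter_upwards [hlim.eventually_le_const hc, eventually_gt_atTop 0] with k hk hk0
  have hk0 : (0 : ℝ) < k := by exact_mod_cast hk0
  calc (k : ℝ) ^ γ = (k : ℝ) ^ (-(1 - γ)) * k := by
        rw [← Real.rpow_add_one hk0.ne']
        congr 1
        ring
    _ ≤ c * k := by gcongr

lemma natCeil_rpow_le_two_mul (hα : 0 ≤ α) {k : ℕ} (hk : 1 ≤ k) :
    (⌈(k : ℝ) ^ α⌉₊ : ℝ) ≤ 2 * (k : ℝ) ^ α := by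
  have hone : 1 ≤ (k : ℝ) ^ α := Real.one_le_rpow (by exact_mod_cast hk) hα
  exact Nat.ceil_le_two_mul (by linarith)

lemma summable_sq_natCeil_mul_exp_div_two_pow (hα : 0 ≤ α) (hγ : γ < 1) (hδ : 0 < δ) :
    Summable fun k : ℕ =>
      (2 * (⌈(k : ℝ) ^ α⌉₊ : ℝ)) ^ 2 * (Real.exp (2 * (k : ℝ) ^ γ) / δ) / (2 ^ k + 1) := by
  have hlog : 0 < Real.log 2 := Real.log_pos one_lt_two
  refine ((summable_rpow_mul_exp_neg_mul_rpow (half_pos hlog) one_pos (2 * α)).mul_left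
    (16 / δ)).of_norm_bounded_eventually_nat ?_
  filter_upwards [eventually_rpow_le_mul hγ (c := Real.log 2 / 4) (by positivity),
    eventually_ge_atTop 1] with k hk hk1
  have hceil := natCeil_rpow_le_two_mul hα hk1
  have htwo : (2 : ℝ) ^ k = Real.exp (Real.log 2 * k) := by
    rw [mul_comm, Real.exp_nat_mul, Real.exp_log two_pos]
  rw [Real.norm_of_nonneg (by positivity)]
  calc (2 * (⌈(k : ℝ) ^ α⌉₊ : ℝ)) ^ 2 * (Real.exp (2 * (k : ℝ) ^ γ) / δ) / (2 ^ k + 1)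
      ≤ (2 * (2 * (k : ℝ) ^ α)) ^ 2 * (Real.exp (2 * (Real.log 2 / 4 * k)) / δ) / 2 ^ k := by
        gcongr
        linarith
    _ = 16 / δ * (((k : ℝ) ^ α) ^ 2 * (Real.exp (2 * (Real.log 2 / 4 * k)) / 2 ^ k)) := by
        ring
    _ = 16 / δ * ((k : ℝ) ^ (2 * α) * Real.exp (-(Real.log 2 / 2 * (k : ℝ) ^ (1 : ℝ)))) := by
        rw [htwo, ← Real.exp_sub, Real.rpow_one, mul_comm 2 α, Real.rpow_mul (Nat.cast_nonneg k),
          Real.rpow_two]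
        ring_nf

lemma summable_natCeil_mul_exp_neg_div (hα : 0 ≤ α) (hγ : α < 2 * γ) (hc : 0 < c) :
    Summable fun k : ℕ => (2 * (⌈(k : ℝ) ^ α⌉₊ : ℝ) + 1) *
      (2 * Real.exp (-((k : ℝ) ^ γ) ^ 2 / (2 * (2 * ⌈(k : ℝ) ^ α⌉₊ * c)))) := by
  refine ((summable_rpow_mul_exp_neg_mul_rpow (c := 1 / (8 * c)) (by positivity)
    (sub_pos.2 hγ) α).mul_left 10).of_norm_bounded_eventually_nat ?_
  filter_upwards [eventually_ge_atTop 1] with k hk1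
  have hk0 : (0 : ℝ) < k := by exact_mod_cast hk1
  have hceil := natCeil_rpow_le_two_mul hα hk1
  have hone : 1 ≤ (k : ℝ) ^ α := Real.one_le_rpow (by exact_mod_cast hk1) hα
  have : (0 : ℝ) < ⌈(k : ℝ) ^ α⌉₊ := zero_lt_one.trans_le (hone.trans (Nat.le_ceil _))
  have hexponent : ((k : ℝ) ^ γ) ^ 2 / (2 * (2 * (2 * (k : ℝ) ^ α) * c)) =
      1 / (8 * c) * (k : ℝ) ^ (2 * γ - α) := by
    rw [Real.rpow_sub hk0, mul_comm 2 γ, Real.rpow_mul hk0.le, Real.rpow_two]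
    field_simp
    norm_num
  rw [Real.norm_of_nonneg (by positivity)]
  calc (2 * (⌈(k : ℝ) ^ α⌉₊ : ℝ) + 1) *
        (2 * Real.exp (-((k : ℝ) ^ γ) ^ 2 / (2 * (2 * ⌈(k : ℝ) ^ α⌉₊ * c))))
      ≤ 5 * (k : ℝ) ^ α *
        (2 * Real.exp (-(((k : ℝ) ^ γ) ^ 2 / (2 * (2 * (2 * (k : ℝ) ^ α) * c))))) := by
        rw [neg_div]
        gcongr
        linarith
    _ = 10 * ((k : ℝ) ^ α * Real.exp (-(1 / (8 * c) * (k : ℝ) ^ (2 * γ - α)))) := by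
        rw [hexponent]
        ring

end Scales

section AlmostSure

variable {Ω : Type*} {m mΩ : MeasurableSpace Ω} {μ : Measure Ω} {α β b : ℝ}

lemma ae_eventually_notMem_of_summable_measureReal [IsFiniteMeasure μ] {s : ℕ → Set Ω} {r : ℕ → ℝ}
    (hr : Summable r) (hs : ∀ᶠ k in atTop, μ.real (s k) ≤ r k) :
    ∀ᵐ ω ∂μ, ∀ᶠ k in atTop, ω ∉ s k := by
  have hsum : Summable fun k => μ.real (s k) :=
    hr.of_norm_bounded_eventually_nat <| by
      simpa only [Real.norm_of_nonneg measureReal_nonneg] using hs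
  refine ae_eventually_notMem ?_
  simpa only [ofReal_measureReal (measure_ne_top μ _)] using hsum.tsum_ofReal_ne_top

theorem IsSinaiEnvironment.ae_eventually_exists_notMem_Ioo [IsProbabilityMeasure μ]
    {env : ℤ → Ω → ℝ} {δ : ℝ} {X : ℕ → Ω → ℤ} (h : IsSinaiEnvironment δ env μ)
    (hX : IsQuenchedChain m μ (fun ω => nnKernel fun i => env i ω) 0 X) (hα0 : 0 ≤ α)
    (hα : α < 2) :
    ∀ᵐ ω ∂μ, ∀ᶠ k : ℕ in atTop,
      ∃ i ≤ 2 ^ k, X i ω ∉ Finset.Ioo (-(⌈(k : ℝ) ^ α⌉₊ : ℤ)) ⌈(k : ℝ) ^ α⌉₊ := by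
  obtain ⟨γ, hγα, hγ⟩ := exists_between (show α / 2 < 1 by linarith)
  have hlog : 0 < Real.log δ ^ 2 := by
    have := (Real.log_neg h.pos h.lt_one).ne
    positivity
  have hae := ae_eventually_notMem_of_summable_measureReal (μ := μ)
    (s := fun k : ℕ => {ω | ∀ i ≤ 2 ^ k,
      X i ω ∈ Finset.Ioo (-(⌈(k : ℝ) ^ α⌉₊ : ℤ)) ⌈(k : ℝ) ^ α⌉₊})
    ((summable_sq_natCeil_mul_exp_div_two_pow hα0 hγ h.pos).add
      (summable_natCeil_mul_exp_neg_div hα0 (by linarith : α < 2 * γ) hlog)) ?_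
  · filter_upwards [hae] with ω hω
    simpa using hω
  · filter_upwards [eventually_ge_atTop 1] with k hk
    have hpos : 0 < ⌈(k : ℝ) ^ α⌉₊ :=
      Nat.ceil_pos.2 (Real.rpow_pos_of_pos (by exact_mod_cast hk) α)
    have hbound := h.measureReal_forall_mem_Ioo_le hX
      (Finset.mem_Ioo.2 ⟨neg_neg_of_pos (Nat.cast_pos.2 hpos), Nat.cast_pos.2 hpos⟩)
      (by positivity : 0 ≤ (k : ℝ) ^ γ) (2 ^ k)
    simpa [sub_neg_eq_add, ← two_mul] using hbound

lemma measureReal_forall_notMem_le_exp [IsProbabilityMeasure μ] {ι E : Type*} [MeasurableSpace E]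
    {f : ι → Ω → E} (hf : ∀ i, Measurable (f i)) (hindep : iIndepFun f μ) {B : Set E}
    (hB : MeasurableSet B) {q : ℝ} (T : Finset ι) (hq : ∀ i ∈ T, q ≤ μ.real {ω | f i ω ∈ B}) :
    μ.real {ω | ∀ i ∈ T, f i ω ∉ B} ≤ Real.exp (-(q * T.card)) := by
  have hsite (i : ι) (hi : i ∈ T) : μ.real (f i ⁻¹' Bᶜ) ≤ Real.exp (-q) := by
    rw [preimage_compl, probReal_compl_eq_one_sub (hf i hB)]
    linarith [Real.add_one_le_exp (-q), show q ≤ μ.real (f i ⁻¹' B) from hq i hi]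
  calc μ.real {ω | ∀ i ∈ T, f i ω ∉ B}
      = μ.real (⋂ i ∈ T, f i ⁻¹' Bᶜ) := by
        congr 1
        ext ω
        simp
    _ = ∏ i ∈ T, μ.real (f i ⁻¹' Bᶜ) := by
        simp only [measureReal_def]
        rw [hindep.meas_biInter fun i _ => ⟨_, hB.compl, rfl⟩, ENNReal.toReal_prod]
    _ ≤ ∏ _i ∈ T, Real.exp (-q) := Finset.prod_le_prod (fun _ _ => measureReal_nonneg) hsite
    _ = Real.exp (-(q * T.card)) := by
        rw [Finset.prod_const, ← Real.exp_nat_mul]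
        congr 1
        ring

theorem ae_eventually_exists_pow_lt [IsProbabilityMeasure μ] {f : ℕ → Ω → ℝ}
    (hf : ∀ y, Measurable (f y)) (hindep : iIndepFun f μ) (hβ : β < α) (hb : 1 < b)
    (htail : ∀ᶠ lam in atTop, ∀ y, 1 / Real.log lam ^ β ≤ μ.real {ω | lam < f y ω}) :
    ∀ᵐ ω ∂μ, ∀ᶠ k : ℕ in atTop, ∃ y < ⌈(k : ℝ) ^ α⌉₊, b ^ k < f y ω := by
  have hlog : 0 < Real.log b := Real.log_pos hb
  have hae := ae_eventually_notMem_of_summable_measureReal (μ := μ)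
    (s := fun k : ℕ => {ω | ∀ y ∈ Finset.range ⌈(k : ℝ) ^ α⌉₊, f y ω ∉ Ioi (b ^ k)})
    (summable_rpow_mul_exp_neg_mul_rpow (c := 1 / Real.log b ^ β) (by positivity)
      (sub_pos.2 hβ) 0) ?_
  · filter_upwards [hae] with ω hω
    simpa using hω
  · filter_upwards [(tendsto_pow_atTop_atTop_of_one_lt hb).eventually htail,
      eventually_gt_atTop 0] with k hk hk0
    have hk0 : (0 : ℝ) < k := by exact_mod_cast hk0
    have hrate : 1 / Real.log b ^ β * (k : ℝ) ^ (α - β) ≤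
        1 / Real.log (b ^ k) ^ β * ⌈(k : ℝ) ^ α⌉₊ :=
      calc 1 / Real.log b ^ β * (k : ℝ) ^ (α - β)
          = 1 / Real.log (b ^ k) ^ β * (k : ℝ) ^ α := by
            rw [Real.log_pow, Real.mul_rpow hk0.le hlog.le, Real.rpow_sub hk0]
            ring
        _ ≤ 1 / Real.log (b ^ k) ^ β * ⌈(k : ℝ) ^ α⌉₊ := by
            have : 0 ≤ Real.log (b ^ k) := Real.log_nonneg (one_le_pow₀ hb.le)
            gcongr
            exact Nat.le_ceil _
    refine (measureReal_forall_notMem_le_exp hf hindep measurableSet_Ioi _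
      fun y _ => hk y).trans ?_
    rw [Real.rpow_zero, one_mul, Finset.card_range]
    gcongr

end AlmostSure

section Averages

variable {v : ℕ → ℝ} {a : ℝ}

lemma tendsto_average_atBot_of_exists_le_neg (hv : ∀ i, v i ≤ a) {b : ℕ → ℝ}
    (hb : Tendsto (fun n => b n / n) atTop atTop) (hmin : ∀ᶠ n in atTop, ∃ i ≤ n, v i ≤ -b n) :
    Tendsto (fun n : ℕ => (∑ i ∈ Finset.range (n + 1), v i) / (n : ℝ)) atTop atBot := by
  refine tendsto_atBot_mono' _ ?_
    (tendsto_atBot_add_const_left _ a (tendsto_neg_atTop_atBot.comp hb))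
  filter_upwards [hmin, eventually_gt_atTop 0] with n ⟨i, hin, hi⟩ hn
  have : (0 : ℝ) < n := by exact_mod_cast hn
  have hmem : i ∈ Finset.range (n + 1) := Finset.mem_range_succ_iff.2 hin
  have hothers : ∑ j ∈ (Finset.range (n + 1)).erase i, v j ≤ n * a := by
    simpa [Finset.card_erase_of_mem hmem] using
      Finset.sum_le_card_nsmul ((Finset.range (n + 1)).erase i) v a fun j _ => hv j
  calc (∑ j ∈ Finset.range (n + 1), v j) / (n : ℝ)
      ≤ (-b n + n * a) / n := by
        rw [← Finset.add_sum_erase _ _ hmem]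
        gcongr
    _ = a + -(b n / n) := by
        field_simp
        ring

lemma eventually_exists_le_neg_sq_of_dyadic
    (h : ∀ᶠ k : ℕ in atTop, ∃ i ≤ 2 ^ k, v i ≤ -8 ^ k) :
    ∀ᶠ n : ℕ in atTop, ∃ i ≤ n, v i ≤ -(n : ℝ) ^ 2 := by
  have hlog : Tendsto (Nat.log 2) atTop atTop := by
    refine tendsto_atTop.2 fun k => ?_
    filter_upwards [eventually_ge_atTop (2 ^ k)] with n hn
    exact Nat.le_log_of_pow_le one_lt_two hn
  filter_upwards [hlog.eventually (h.and (eventually_ge_atTop 2)), eventually_gt_atTop 0]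
    with n ⟨⟨i, hi, hvi⟩, hk⟩ hn
  have hsq : n ^ 2 ≤ 8 ^ Nat.log 2 n :=
    calc n ^ 2 ≤ (2 ^ (Nat.log 2 n + 1)) ^ 2 := by
          gcongr
          exact (Nat.lt_pow_succ_log_self one_lt_two n).le
      _ = 2 ^ (2 * Nat.log 2 n + 2) := by ring
      _ ≤ 2 ^ (3 * Nat.log 2 n) := Nat.pow_le_pow_right two_pos (by omega)
      _ = 8 ^ Nat.log 2 n := by rw [pow_mul]; norm_num
  refine ⟨i, hi.trans (Nat.pow_log_le_self 2 hn.ne'), hvi.trans (neg_le_neg ?_)⟩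
  exact_mod_cast hsq

end Averages

section Paths

variable {x : ℕ → ℤ} {i : ℕ} {y : ℤ}

lemma exists_le_apply_eq_of_abs_sub_le_one (hx : ∀ j, |x (j + 1) - x j| ≤ 1) (h0 : x 0 ≤ y)
    (hi : y ≤ x i) : ∃ j ≤ i, x j = y := by
  induction i with
  | zero => exact ⟨0, le_rfl, h0.antisymm hi⟩
  | succ i ih =>
    by_cases hyi : y ≤ x i
    · obtain ⟨j, hj, hjy⟩ := ih hyi
      exact ⟨j, by omega, hjy⟩
    · have := abs_le.1 (hx i)
      exact ⟨i + 1, le_rfl, by omega⟩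

lemma exists_le_apply_eq_or_of_notMem_Ioo (h0 : x 0 = 0) (hx : ∀ j, |x (j + 1) - x j| ≤ 1)
    {L : ℕ} (hi : x i ∉ Finset.Ioo (-(L : ℤ)) L) :
    (∀ y < L, ∃ j ≤ i, x j = y) ∨ ∀ y < L, ∃ j ≤ i, x j = -(y : ℤ) := by
  rw [Finset.mem_Ioo, not_and_or, not_lt, not_lt] at hi
  refine hi.symm.imp (fun hi y hy => ?_) fun hi y hy => ?_
  · exact exists_le_apply_eq_of_abs_sub_le_one hx (by omega) (by omega)
  · have hneg (j : ℕ) : |(-x (j + 1)) - -x j| ≤ 1 := by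
      rw [neg_sub_neg, abs_sub_comm]
      exact hx j
    obtain ⟨j, hj, hjy⟩ := exists_le_apply_eq_of_abs_sub_le_one (x := fun j => -x j) (y := y)
      hneg (by omega) (by omega : (y : ℤ) ≤ -x i)
    exact ⟨j, hj, by omega⟩

theorem tendsto_average_scenery_atBot (h0 : x 0 = 0) (hx : ∀ j, |x (j + 1) - x j| ≤ 1) {s : ℤ → ℝ}
    {a : ℝ} (hs : ∀ y, s y ≤ a) {L : ℕ → ℕ}
    (hexit : ∀ᶠ k in atTop, ∃ i ≤ 2 ^ k, x i ∉ Finset.Ioo (-(L k : ℤ)) (L k))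
    (hright : ∀ᶠ k in atTop, ∃ y < L k, 8 ^ k < -s y)
    (hleft : ∀ᶠ k in atTop, ∃ y < L k, 8 ^ k < -s (-y)) :
    Tendsto (fun n : ℕ => (∑ i ∈ Finset.range (n + 1), s (x i)) / (n : ℝ)) atTop atBot := by
  have hdyadic : ∀ᶠ k : ℕ in atTop, ∃ i ≤ 2 ^ k, s (x i) ≤ -8 ^ k := by
    filter_upwards [hexit, hright, hleft] with k ⟨i, hi, hxi⟩ ⟨y, hy, hsy⟩ ⟨z, hz, hsz⟩
    rcases exists_le_apply_eq_or_of_notMem_Ioo h0 hx hxi with hvisit | hvisit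
    · obtain ⟨j, hj, hjy⟩ := hvisit y hy
      exact ⟨j, hj.trans hi, by rw [hjy]; linarith⟩
    · obtain ⟨j, hj, hjz⟩ := hvisit z hz
      exact ⟨j, hj.trans hi, by rw [hjz]; linarith⟩
  refine tendsto_average_atBot_of_exists_le_neg (fun i => hs (x i)) ?_
    (eventually_exists_le_neg_sq_of_dyadic hdyadic)
  refine tendsto_natCast_atTop_atTop.congr' ?_
  filter_upwards [eventually_gt_atTop 0] with n hn
  field_simp

end Paths

theorem stmt1_general {Ω : Type*} {m mΩ : MeasurableSpace Ω} {μ : Measure Ω}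
    [IsProbabilityMeasure μ] {δ : ℝ} {env : ℤ → Ω → ℝ} (henv : IsSinaiEnvironment δ env μ)
    {X : ℕ → Ω → ℤ} (hX : IsQuenchedChain m μ (fun ω => nnKernel fun i => env i ω) 0 X)
    {sce : ℤ → Ω → ℝ} (hsce : ∀ x, Measurable (sce x)) (hindep : iIndepFun sce μ) {a : ℝ}
    (ha : ∀ x, ∀ᵐ ω ∂μ, sce x ω ≤ a) {β : ℝ} (hβ : β < 2)
    (htail : ∀ᶠ lam in atTop, ∀ x,
      1 / Real.log lam ^ β ≤ μ.real {ω | lam < max (-(sce x ω)) 0}) :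
    ∀ᵐ ω ∂μ,
      Tendsto (fun n : ℕ => (∑ i ∈ Finset.range (n + 1), sce (X i ω) ω) / (n : ℝ))
        atTop atBot := by
  obtain ⟨α, hβα, hα⟩ := exists_between (max_lt hβ two_pos)
  obtain ⟨hβα, hα0⟩ := max_lt_iff.1 hβα
  have hdeep (g : ℕ → ℤ) (hg : Function.Injective g) :
      ∀ᵐ ω ∂μ, ∀ᶠ k : ℕ in atTop, ∃ y < ⌈(k : ℝ) ^ α⌉₊, (8 : ℝ) ^ k < -sce (g y) ω := by
    refine ae_eventually_exists_pow_lt (f := fun y ω => -sce (g y) ω)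
      (fun y => (hsce (g y)).neg)
      ((hindep.precomp hg).comp (fun _ s => -s) fun _ => measurable_neg) hβα (by norm_num) ?_
    filter_upwards [htail, eventually_ge_atTop 0] with lam hlam hlam0 y
    simpa only [lt_max_iff, hlam0.not_gt, or_false] using hlam (g y)
  have hright := hdeep (fun y => y) Nat.cast_injective
  have hleft := hdeep (fun y => -y) (neg_injective.comp Nat.cast_injective)
  have hstep := hX.ae_forall_transition (R := fun x y => |y - x| = 1)
    fun ω x y => nnKernel_eq_zero _
  filter_upwards [hX.ae_eq_start, hstep, ae_all_iff.2 ha,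
    henv.ae_eventually_exists_notMem_Ioo hX hα0.le hα, hright, hleft]
    with ω h0 hstep hs hexit hright hleft
  exact tendsto_average_scenery_atBot (x := fun n => X n ω) (s := fun y => sce y ω)
    (L := fun k => ⌈(k : ℝ) ^ α⌉₊) h0 (fun j => (hstep j).le) hs hexit hright hleft

/-- Theorem 1.1 (ii): Sinai's walk in i.i.d. random scenery. If
`a := ess sup ξ₀ < ∞` and `Q{ξ₀⁻ > λ} ≥ 1/(log λ)^{2−ε}` for all large `λ`
(for some `ε ∈ (0,2)`), then `ℙ⊗Q`-almost surely `Z_n/n → −∞`. -/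
theorem stmt1 {Ω : Type*} [MeasurableSpace Ω] (μ : Measure Ω) [IsProbabilityMeasure μ]
    -- the i.i.d. environment
    (env : ℤ → Ω → ℝ) (henv_meas : ∀ i, Measurable (env i))
    (henv_indep : iIndepFun env μ)
    (henv_ident : ∀ i, IdentDistrib (env i) (env 0) μ μ)
    (δ : ℝ) (hδ0 : 0 < δ) (hδ1 : δ < 1 / 2)
    (henv_ell : ∀ i, ∀ᵐ ω ∂μ, δ ≤ env i ω ∧ env i ω ≤ 1 - δ)
    (henv_mean : ∫ ω, Real.log ((1 - env 0 ω) / env 0 ω) ∂μ = 0)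
    (henv_var : 0 < variance (fun ω => Real.log ((1 - env 0 ω) / env 0 ω)) μ)
    -- Sinai's walk: a nearest-neighbour Markov chain in the environment `env`,
    -- characterized by its quenched cylinder probabilities given `σ(env)`
    (X : ℕ → Ω → ℤ) (hX_meas : ∀ n, Measurable (X n))
    (hX0 : ∀ᵐ ω ∂μ, X 0 ω = 0)
    (hquenched : ∀ (n : ℕ) (x : ℕ → ℤ), x 0 = 0 →
      μ[Set.indicator {ω | ∀ i ≤ n, X i ω = x i} (fun _ => (1 : ℝ)) |
          MeasurableSpace.comap (fun ω i => env i ω) MeasurableSpace.pi]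
        =ᵐ[μ] fun ω => ∏ i ∈ Finset.range n, stepProb (env (x i) ω) (x (i + 1) - x i))
    -- the i.i.d. scenery, independent of the environment and of the walk
    (sce : ℤ → Ω → ℝ) (hsce_meas : ∀ x, Measurable (sce x))
    (hsce_indep : iIndepFun sce μ)
    (hsce_ident : ∀ x, IdentDistrib (sce x) (sce 0) μ μ)
    (hsce_env_walk_indep :
      IndepFun (fun ω => (fun x : ℤ => sce x ω))
        (fun ω => ((fun i : ℤ => env i ω), (fun n : ℕ => X n ω))) μ)
    -- `a := ess sup ξ₀ < ∞`
    (a : ℝ) (ha : a = essSup (fun ω => sce 0 ω) μ) (ha_fin : ∀ᵐ ω ∂μ, sce 0 ω ≤ a)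
    -- heavy negative tails: `Q{ξ₀⁻ > λ} ≥ 1/(log λ)^{2−ε}` for all large `λ`
    (ε : ℝ) (hε : 0 < ε) (hε2 : ε < 2) (lam₀ : ℝ) (hlam₀ : 1 < lam₀)
    (htail : ∀ lam : ℝ, lam₀ ≤ lam →
      1 / Real.log lam ^ (2 - ε : ℝ) ≤ (μ {ω | lam < max (-(sce 0 ω)) 0}).toReal) :
    ∀ᵐ ω ∂μ,
      Tendsto (fun n : ℕ => (∑ i ∈ Finset.range (n + 1), sce (X i ω) ω) / (n : ℝ))
        atTop atBot := by
  have htail_all : ∀ᶠ lam in atTop, ∀ x,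
      1 / Real.log lam ^ (2 - ε) ≤ μ.real {ω | lam < max (-(sce x ω)) 0} := by
    filter_upwards [eventually_ge_atTop lam₀] with lam hlam x
    have hident := (hsce_ident x).measure_mem_eq
      (measurableSet_lt measurable_const (measurable_neg.max measurable_const) :
        MeasurableSet {s : ℝ | lam < max (-s) 0})
    exact (htail lam hlam).trans_eq (congrArg ENNReal.toReal hident.symm)
  exact stmt1_general
    ⟨hδ0, henv_meas, henv_indep, henv_ell,
      fun i => ((henv_ident i).comp measurable_logRatio).integral_eq.trans henv_mean⟩
    ⟨(measurable_pi_lambda _ henv_meas).comap_le, hX_meas, hquenched⟩ hsce_meas hsce_indep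
    (fun x => (hsce_ident x).symm.ae_snd measurableSet_Iic ha_fin) (by linarith) htail_all
end

section
/- For every δ > 0 there exists j₀ such that for all j ≥ j₀: ∑_{i=−1}^{M(j)} ε_i(j)^δ ≤ 2(1 + 1/δ) · ε_{M(j)}(j)^δ. -/
open Filter

/-- `γ_i(j) := j^((1-α)^i)`. -/
noncomputable def gamScale (α : ℝ) (j : ℝ) (i : ℕ) : ℝ := j ^ ((1 - α) ^ i)

/-- `M(j) := inf{n ≥ 0 : γ_n(j) ≤ (log log j)^((1-α)/(2+ε'))}`. -/
noncomputable def bigM (α ε' : ℝ) (j : ℝ) : ℕ :=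
  sInf {n : ℕ | gamScale α j n ≤ (Real.log (Real.log j)) ^ ((1 - α) / (2 + ε'))}

/-- `ε_i(j) := exp(−c₄ γ_{i+2}(j))` for `i ≥ 0`. -/
noncomputable def epsScale (α c₄ : ℝ) (j : ℝ) (i : ℕ) : ℝ :=
  Real.exp (-(c₄ * gamScale α j (i + 2)))

/-! Put `q = 1 - α` and `x = γ_i(j)`, so that `γ_{i+k}(j) = x ^ q ^ k` and
`ε_{i+1}(j) / ε_i(j) = exp (c₄ (x ^ q ^ 2 - x ^ q ^ 3))`. The exponent tends to infinity with `x`,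
and for `i < M(j)` the minimality of `M(j)` bounds `x` below by a power of `log log j`. Hence for
large `j` the terms `ε_i(j) ^ δ` at least double at each step up to `M(j)`, and their sum is at most
twice the last one. The extra term `ε_{-1}(j) = ε_0(j)` turns the partial sum at `i = 0` into
exactly `2 ε_0(j) ^ δ`, so it is absorbed at no cost. -/

theorem tendsto_rpow_sub_rpow_atTop {a b : ℝ} (ha : 0 < a) (hba : b < a) :
    Tendsto (fun x : ℝ => x ^ a - x ^ b) atTop atTop := by
  have hratio : Tendsto (fun x : ℝ => 1 - x ^ (-(a - b))) atTop (nhds 1) := by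
    simpa only [sub_zero] using (tendsto_rpow_neg_atTop (sub_pos.2 hba)).const_sub 1
  refine ((tendsto_rpow_atTop ha).atTop_mul_pos one_pos hratio).congr' ?_
  filter_upwards [eventually_gt_atTop 0] with x hx
  rw [mul_sub, mul_one, ← Real.rpow_add hx, neg_sub, add_sub_cancel]

theorem tendsto_log_log_rpow_atTop {s : ℝ} (hs : 0 < s) :
    Tendsto (fun x : ℝ => Real.log (Real.log x) ^ s) atTop atTop :=
  (tendsto_rpow_atTop hs).comp (Real.tendsto_log_atTop.comp Real.tendsto_log_atTop)

theorem add_sum_range_succ_le_two_mul {R : Type*} [Semiring R] [PartialOrder R] [IsOrderedRing R]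
    {a : ℕ → R} {n : ℕ} (h : ∀ i < n, 2 * a i ≤ a (i + 1)) :
    a 0 + ∑ i ∈ Finset.range (n + 1), a i ≤ 2 * a n := by
  induction n with
  | zero => simp [two_mul]
  | succ n ih =>
    calc a 0 + ∑ i ∈ Finset.range (n + 2), a i
        = a 0 + ∑ i ∈ Finset.range (n + 1), a i + a (n + 1) := by
          rw [Finset.sum_range_succ, add_assoc]
      _ ≤ 2 * a n + a (n + 1) := by
          gcongr
          exact ih fun i hi => h i (hi.trans n.lt_succ_self)
      _ ≤ a (n + 1) + a (n + 1) := by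
          gcongr
          exact h n n.lt_succ_self
      _ = 2 * a (n + 1) := (two_mul _).symm

theorem gamScale_rpow (α : ℝ) {j : ℝ} (hj : 0 ≤ j) (i k : ℕ) :
    gamScale α j i ^ ((1 - α) ^ k) = gamScale α j (i + k) := by
  rw [gamScale, gamScale, ← Real.rpow_mul hj, pow_add]

theorem lt_gamScale_of_lt_bigM {α ε' j : ℝ} {i : ℕ} (hi : i < bigM α ε' j) :
    Real.log (Real.log j) ^ ((1 - α) / (2 + ε')) < gamScale α j i :=
  not_le.1 (Nat.notMem_of_lt_sInf hi)

theorem epsScale_nonneg (α c j : ℝ) (i : ℕ) : 0 ≤ epsScale α c j i :=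
  (Real.exp_pos _).le

theorem epsScale_rpow (α c j δ : ℝ) (i : ℕ) :
    epsScale α c j i ^ δ = epsScale α (c * δ) j i := by
  rw [epsScale, epsScale, ← Real.exp_mul, neg_mul, mul_right_comm]

theorem two_mul_epsScale_le_succ_iff {α c j : ℝ} {i : ℕ} (hc : 0 < c) :
    2 * epsScale α c j i ≤ epsScale α c j (i + 1) ↔
      Real.log 2 / c ≤ gamScale α j (i + 2) - gamScale α j (i + 3) := by
  have hexp : 2 * epsScale α c j i = Real.exp (Real.log 2 - c * gamScale α j (i + 2)) := by
    rw [epsScale, sub_eq_add_neg, Real.exp_add, Real.exp_log two_pos]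
  rw [hexp, epsScale, Real.exp_le_exp, add_right_comm i 1 2, div_le_iff₀ hc]
  constructor <;> intro h <;> linarith

theorem exists_forall_two_mul_epsScale_le_succ {α c : ℝ} (hα0 : 0 < α) (hα1 : α < 1)
    (hc : 0 < c) :
    ∃ x : ℝ, ∀ j : ℝ, 0 ≤ j → ∀ i : ℕ, x ≤ gamScale α j i →
      2 * epsScale α c j i ≤ epsScale α c j (i + 1) := by
  have hq : 0 < 1 - α := sub_pos.2 hα1
  have hgap : Tendsto (fun x : ℝ => x ^ (1 - α) ^ 2 - x ^ (1 - α) ^ 3) atTop atTop :=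
    tendsto_rpow_sub_rpow_atTop (pow_pos hq 2)
      (pow_lt_pow_right_of_lt_one₀ hq (sub_lt_self 1 hα0) (by norm_num))
  obtain ⟨x, hx⟩ := eventually_atTop.1 (hgap.eventually_ge_atTop (Real.log 2 / c))
  refine ⟨x, fun j hj i hxi => (two_mul_epsScale_le_succ_iff hc).2 ?_⟩
  simpa only [gamScale_rpow α hj] using hx _ hxi

theorem eventually_forall_lt_bigM_two_mul_epsScale_le_succ {α c ε' : ℝ} (hα0 : 0 < α)
    (hα1 : α < 1) (hc : 0 < c) (hε' : -2 < ε') :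
    ∀ᶠ j : ℝ in atTop, ∀ i < bigM α ε' j, 2 * epsScale α c j i ≤ epsScale α c j (i + 1) := by
  have hs : 0 < (1 - α) / (2 + ε') := div_pos (by linarith) (by linarith)
  obtain ⟨x, hdouble⟩ := exists_forall_two_mul_epsScale_le_succ hα0 hα1 hc
  filter_upwards [(tendsto_log_log_rpow_atTop hs).eventually_ge_atTop x,
    eventually_ge_atTop 0] with j hx hj i hi
  exact hdouble j hj i (hx.trans (lt_gamScale_of_lt_bigM hi).le)

theorem stmt6_general {α c ε' δ : ℝ} (hα0 : 0 < α) (hα1 : α < 1) (hc : 0 < c) (hε' : -2 < ε')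
    (hδ : 0 < δ) :
    ∀ᶠ j : ℝ in atTop,
      epsScale α c j 0 ^ δ + ∑ i ∈ Finset.range (bigM α ε' j + 1), epsScale α c j i ^ δ
        ≤ 2 * epsScale α c j (bigM α ε' j) ^ δ := by
  simp only [epsScale_rpow]
  exact (eventually_forall_lt_bigM_two_mul_epsScale_le_succ hα0 hα1 (mul_pos hc hδ) hε').mono
    fun _ => add_sum_range_succ_le_two_mul

/-- For every `δ > 0` there exists `j₀` such that for all `j ≥ j₀`:
`∑_{i=-1}^{M(j)} ε_i(j)^δ ≤ 2(1 + 1/δ) · ε_{M(j)}(j)^δ`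
(recall `ε_{-1}(j) := ε₀(j)`). -/
theorem stmt6 (ε ε' α c₄ : ℝ) (hε : 0 < ε) (hε' : ε' = min (1 / 35) (ε / 2))
    (hα0 : 0 < α) (hα1 : α < 1)
    (hβ : 0 < (1 - α) ^ 2 * (2 + ε) - (2 + ε'))
    (hβ' : 0 < ε' / 2 - α)
    (hc₄0 : 0 < c₄) (hc₄1 : c₄ < 1 / 6) :
    ∀ δ : ℝ, 0 < δ → ∃ j₀ : ℕ, ∀ j : ℕ, j₀ ≤ j →
      epsScale α c₄ (j : ℝ) 0 ^ δ
          + ∑ i ∈ Finset.range (bigM α ε' (j : ℝ) + 1), epsScale α c₄ (j : ℝ) i ^ δ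
        ≤ 2 * (1 + 1 / δ) * epsScale α c₄ (j : ℝ) (bigM α ε' (j : ℝ)) ^ δ := by
  intro δ hδ
  have h := stmt6_general hα0 hα1 hc₄0 (show -2 < ε' by linarith) hδ
  exact eventually_atTop.1 <| (tendsto_natCast_atTop_atTop.eventually h).mono fun j hj =>
    hj.trans <| mul_le_mul_of_nonneg_right (by linarith [one_div_pos.2 hδ])
      (Real.rpow_nonneg (epsScale_nonneg ..) δ)
end

section
/- Assume there exist ε ∈ (0,2) and λ₀ > 0 such that Q{ξ₀⁻ > λ} ≥ 1/(log λ)^{2−ε} for all λ ≥ λ₀, and fix ε'' ∈ (0,ε). Then Q-almost surely, (1/n)·max_{0 ≤ x ≤ ⌈(log n)^{2−ε''}⌉} ξ_x⁻ → ∞ as n → ∞; that is, for every K > 0, Q-almost surely max_{0 ≤ x ≤ ⌈(log n)^{2−ε''}⌉} ξ_x⁻ ≥ K·n for all sufficiently large n. -/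
open MeasureTheory ProbabilityTheory Filter Set

/-!
Cut the time axis at the geometric scales `n ≈ exp k`. At scale `k` there are at least `k ^ α`
sites, and each of them exceeds `exp (a * k)` with probability at least `(a * k) ^ (-β)`; by
independence all of them fail with probability at most `exp (-c * k ^ (α - β))`. This is summable
in `k` because `β < α`, so by Borel–Cantelli almost surely only finitely many scales fail. Since
`exp (a * ⌊log n⌋₊)` is at least `exp (-a) * n ^ a`, a rate `a > γ` dominates every multiple of
`n ^ γ`. The scales are needed because the failure probabilities for single times `n` need not be
summable in `n`.
-/

section IndependentEvents

variable {Ω ι : Type*} [MeasurableSpace Ω] {μ : Measure Ω}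

theorem iIndepSet_preimage_of_iIndepFun {E : ι → Type*} [∀ i, MeasurableSpace (E i)]
    {X : ∀ i, Ω → E i} (hX : iIndepFun X μ) {B : ∀ i, Set (E i)}
    (hB : ∀ i, MeasurableSet (B i)) : iIndepSet (fun i ↦ X i ⁻¹' B i) μ :=
  (iIndepSet_iff_iIndep _ _).mpr <| iIndep_of_iIndep_of_le hX.iIndep fun i ↦
    MeasurableSpace.generateFrom_singleton_le ⟨B i, hB i, rfl⟩

theorem measureReal_biInter_compl_le_exp_neg_sum {A : ι → Set Ω} (hA : iIndepSet A μ)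
    (hA_meas : ∀ i, NullMeasurableSet (A i) μ) (s : Finset ι) :
    μ.real (⋂ i ∈ s, (A i)ᶜ) ≤ Real.exp (-∑ i ∈ s, μ.real (A i)) := by
  have := hA.isProbabilityMeasure
  have measure_biInter : μ (⋂ i ∈ s, (A i)ᶜ) = ∏ i ∈ s, μ (A i)ᶜ :=
    (iIndepSet_iff _ _).mp hA s fun i _ ↦
      (MeasurableSpace.measurableSet_generateFrom (mem_singleton _)).compl
  calc μ.real (⋂ i ∈ s, (A i)ᶜ) = ∏ i ∈ s, μ.real (A i)ᶜ := by
        simp only [Measure.real, measure_biInter, ENNReal.toReal_prod]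
    _ ≤ ∏ i ∈ s, Real.exp (-μ.real (A i)) :=
        Finset.prod_le_prod (fun _ _ ↦ measureReal_nonneg) fun i _ ↦
          (probReal_compl_eq_one_sub₀ (hA_meas i)).trans_le (Real.one_sub_le_exp_neg _)
    _ = Real.exp (-∑ i ∈ s, μ.real (A i)) := by
        rw [← Real.exp_sum, Finset.sum_neg_distrib]

theorem ae_eventually_exists_mem_of_summable_exp_neg_sum {A : ℕ → ι → Set Ω}
    (hA : ∀ k, iIndepSet (A k) μ) (hA_meas : ∀ k i, NullMeasurableSet (A k i) μ)
    {S : ℕ → Finset ι} (hS : Summable fun k ↦ Real.exp (-∑ i ∈ S k, μ.real (A k i))) :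
    ∀ᵐ ω ∂μ, ∀ᶠ k in atTop, ∃ i ∈ S k, ω ∈ A k i := by
  have := (hA 0).isProbabilityMeasure
  have summable_none : Summable fun k ↦ μ.real (⋂ i ∈ S k, (A k i)ᶜ) :=
    hS.of_nonneg_of_le (fun _ ↦ measureReal_nonneg) fun k ↦
      measureReal_biInter_compl_le_exp_neg_sum (hA k) (hA_meas k) (S k)
  have tsum_ne_top := summable_none.tsum_ofReal_ne_top
  simp only [ofReal_measureReal (measure_ne_top μ _)] at tsum_ne_top
  filter_upwards [ae_eventually_notMem tsum_ne_top] with ω hω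
  filter_upwards [hω] with k hk
  simpa only [mem_iInter, mem_compl_iff, not_forall, not_not, exists_prop] using hk

end IndependentEvents

theorem summable_exp_neg_mul_natCast_rpow {c δ : ℝ} (hc : 0 < c) (hδ : 0 < δ) :
    Summable fun k : ℕ ↦ Real.exp (-c * (k : ℝ) ^ δ) := by
  have tendsto_rpow : Tendsto (fun k : ℕ ↦ (k : ℝ) ^ δ) atTop atTop :=
    (tendsto_rpow_atTop hδ).comp tendsto_natCast_atTop_atTop
  have isBigO_rpow :=
    (isLittleO_exp_neg_mul_rpow_atTop hc (-2 / δ)).isBigO.comp_tendsto tendsto_rpow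
  refine summable_of_isBigO_nat (Real.summable_nat_rpow.mpr (by norm_num : (-2 : ℝ) < -1))
    (isBigO_rpow.congr_right fun k ↦ ?_)
  rw [Function.comp_apply, ← Real.rpow_mul k.cast_nonneg, mul_div_cancel₀ _ hδ.ne']

theorem isLittleO_natCast_rpow_exp_mul_floor_log {γ a : ℝ} (ha : 0 ≤ a) (hγa : γ < a) :
    (fun n : ℕ ↦ (n : ℝ) ^ γ) =o[atTop] fun n : ℕ ↦ Real.exp (a * ⌊Real.log n⌋₊) := by
  have tendsto_log : Tendsto (fun n : ℕ ↦ Real.log n) atTop atTop :=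
    Real.tendsto_log_atTop.comp tendsto_natCast_atTop_atTop
  have tendsto_sub :
      Tendsto (fun n : ℕ ↦ a * ⌊Real.log n⌋₊ - Real.log n * γ) atTop atTop := by
    refine tendsto_atTop_mono (fun n ↦ ?_)
      (tendsto_atTop_add_const_right _ (-a) (tendsto_log.const_mul_atTop (sub_pos.mpr hγa)))
    have := mul_le_mul_of_nonneg_left (Nat.lt_floor_add_one (Real.log n)).le ha
    linarith
  refine (Real.isLittleO_exp_comp_exp_comp.mpr tendsto_sub).congr' ?_ .rfl
  filter_upwards [eventually_gt_atTop 0] with n hn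
  rw [Real.rpow_def_of_pos (Nat.cast_pos.mpr hn)]

section LogarithmicTail

variable {Ω : Type*} [MeasurableSpace Ω] {μ : Measure Ω} {α β : ℝ}

theorem ae_eventually_exists_exp_mul_lt {ι : Type*} {X : ι → Ω → ℝ} (hX : iIndepFun X μ)
    (hX_meas : ∀ i, AEMeasurable (X i) μ)
    (htail : ∀ᶠ t in atTop, ∀ i, 1 / Real.log t ^ β ≤ μ.real {ω | t < X i ω})
    (hβα : β < α) {S : ℕ → Finset ι} (hS : ∀ k : ℕ, (k : ℝ) ^ α ≤ (S k).card)
    {a : ℝ} (ha : 0 < a) :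
    ∀ᵐ ω ∂μ, ∀ᶠ k : ℕ in atTop, ∃ i ∈ S k, Real.exp (a * k) < X i ω := by
  refine ae_eventually_exists_mem_of_summable_exp_neg_sum
    (A := fun k i ↦ X i ⁻¹' Ioi (Real.exp (a * k)))
    (fun k ↦ iIndepSet_preimage_of_iIndepFun hX fun _ ↦ measurableSet_Ioi)
    (fun k i ↦ (hX_meas i).nullMeasurableSet_preimage measurableSet_Ioi) ?_
  have tendsto_exp : Tendsto (fun k : ℕ ↦ Real.exp (a * k)) atTop atTop :=
    Real.tendsto_exp_atTop.comp (tendsto_natCast_atTop_atTop.const_mul_atTop ha)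
  refine .of_norm_bounded_eventually_nat
    (summable_exp_neg_mul_natCast_rpow (c := 1 / a ^ β) (by positivity) (sub_pos.mpr hβα)) ?_
  filter_upwards [tendsto_exp.eventually htail, eventually_gt_atTop 0] with k tail_k hk
  have hk' : (0 : ℝ) < k := Nat.cast_pos.mpr hk
  simp only [Real.log_exp] at tail_k
  rw [Real.norm_of_nonneg (Real.exp_pos _).le, Real.exp_le_exp, neg_mul, neg_le_neg_iff]
  calc 1 / a ^ β * (k : ℝ) ^ (α - β) = (k : ℝ) ^ α * (1 / (a * k) ^ β) := by
        rw [Real.rpow_sub hk', Real.mul_rpow ha.le hk'.le]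
        ring
    _ ≤ (S k).card * (1 / (a * k) ^ β) := by
        gcongr
        exact hS k
    _ ≤ ∑ i ∈ S k, μ.real (X i ⁻¹' Ioi (Real.exp (a * k))) := by
        rw [← nsmul_eq_mul]
        exact Finset.card_nsmul_le_sum _ _ _ fun i _ ↦ tail_k i

theorem stmt18_general {X : ℤ → Ω → ℝ} (hX : iIndepFun X μ)
    (hX_meas : ∀ x, AEMeasurable (X x) μ)
    (htail : ∀ᶠ t in atTop, ∀ x, 1 / Real.log t ^ β ≤ μ.real {ω | t < X x ω})
    (hα : 0 ≤ α) (hβα : β < α) (γ : ℝ) :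
    ∀ᵐ ω ∂μ, ∀ K : ℝ, ∀ᶠ n : ℕ in atTop,
      ∃ x : ℤ, 0 ≤ x ∧ x ≤ ⌈Real.log n ^ α⌉ ∧ K * (n : ℝ) ^ γ ≤ X x ω := by
  set a := |γ| + 1
  have hγa : γ < a := (le_abs_self γ).trans_lt (lt_add_one _)
  have card_sites (k : ℕ) : (k : ℝ) ^ α ≤ (Finset.Icc 0 ⌈(k : ℝ) ^ α⌉).card := by
    have : ⌈(k : ℝ) ^ α⌉ ≤ (Finset.Icc 0 ⌈(k : ℝ) ^ α⌉).card := by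
      rw [Int.card_Icc]
      lia
    exact (Int.le_ceil _).trans (mod_cast this)
  have tendsto_floor_log : Tendsto (fun n : ℕ ↦ ⌊Real.log n⌋₊) atTop atTop :=
    tendsto_nat_floor_atTop.comp (Real.tendsto_log_atTop.comp tendsto_natCast_atTop_atTop)
  filter_upwards [ae_eventually_exists_exp_mul_lt hX hX_meas htail hβα card_sites
    (by positivity : 0 < a)] with ω hω K
  have isLittleO_exp :=
    (isLittleO_natCast_rpow_exp_mul_floor_log (by positivity) hγa).const_mul_left K
  filter_upwards [tendsto_floor_log.eventually hω, isLittleO_exp.eventuallyLE]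
    with n ⟨x, hx, exp_lt⟩ rpow_le
  obtain ⟨x_nonneg, x_le⟩ := Finset.mem_Icc.mp hx
  refine ⟨x, x_nonneg, x_le.trans (Int.ceil_le_ceil ?_), ?_⟩
  · exact Real.rpow_le_rpow (Nat.cast_nonneg _) (Nat.floor_le (Real.log_natCast_nonneg n)) hα
  · rw [Real.norm_of_nonneg (Real.exp_pos _).le] at rpow_le
    exact (Real.le_norm_self _).trans (rpow_le.trans exp_lt.le)

end LogarithmicTail

/-- If `Q{ξ₀⁻ > λ} ≥ 1/(log λ)^{2−ε}` for all `λ ≥ λ₀` (with `ε ∈ (0,2)`) and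
`ε'' ∈ (0,ε)`, then `Q`-a.s. `(1/n)·max_{0 ≤ x ≤ ⌈(log n)^{2−ε''}⌉} ξ_x⁻ → ∞`:
for every `K > 0`, eventually some site `0 ≤ x ≤ ⌈(log n)^{2−ε''}⌉` has
`ξ_x⁻ ≥ K·n`. -/
theorem stmt18 {Ω : Type*} [MeasurableSpace Ω] (μ : Measure Ω) [IsProbabilityMeasure μ]
    (sce : ℤ → Ω → ℝ) (hsce_meas : ∀ x, Measurable (sce x))
    (hsce_indep : iIndepFun sce μ)
    (hsce_ident : ∀ x, IdentDistrib (sce x) (sce 0) μ μ)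
    (ε : ℝ) (hε0 : 0 < ε) (hε2 : ε < 2) (lam₀ : ℝ) (hlam₀ : 0 < lam₀)
    (htail : ∀ lam : ℝ, lam₀ ≤ lam →
      1 / Real.log lam ^ (2 - ε : ℝ) ≤ (μ {ω | lam < max (-(sce 0 ω)) 0}).toReal)
    (ε'' : ℝ) (hε''0 : 0 < ε'') (hε'' : ε'' < ε) :
    ∀ᵐ ω ∂μ, ∀ K : ℝ, 0 < K → ∀ᶠ n : ℕ in atTop,
      ∃ x : ℤ, 0 ≤ x ∧ x ≤ ⌈Real.log (n : ℝ) ^ (2 - ε'' : ℝ)⌉ ∧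
        K * (n : ℝ) ≤ max (-(sce x ω)) 0 := by
  have hneg : Measurable fun y : ℝ ↦ max (-y) 0 := by fun_prop
  have htail_unif : ∀ᶠ t in atTop, ∀ x,
      1 / Real.log t ^ (2 - ε) ≤ μ.real {ω | t < max (-(sce x ω)) 0} :=
    (eventually_ge_atTop lam₀).mono fun t ht x ↦ (htail t ht).trans_eq <| congrArg ENNReal.toReal
      (((hsce_ident x).comp hneg).measure_mem_eq measurableSet_Ioi).symm
  filter_upwards [stmt18_general (hsce_indep.comp _ fun _ ↦ hneg)
    (fun x ↦ (hneg.comp (hsce_meas x)).aemeasurable) htail_unif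
    (by linarith : 0 ≤ 2 - ε'') (by linarith) 1] with ω hω K _
  simpa only [Function.comp_apply, Real.rpow_one] using hω K
end
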